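/- Let l₁ = (3/5, 4/5), l₂ = (1, 0), with l^⊥ = (−b, a) for l = (a,b), and let R₁^o, R₂^o be the Fourier multiplier operators on 𝕋² with symbols 25(k₂² − k₁²)/(12|k|²) and 7(k₂² − k₁²)/(12|k|²) + 4k₁k₂/|k|² respectively (k ≠ 0, annihilating the k = 0 mode). Then for every Q ∈ C^∞(𝕋²) with zero mean: (a) ∑_{j=1}^{2} (l_j^⊥·∇)(l_j·∇)(R_j^o Q) = ΔQ; and consequently (b) there exists a smooth scalar function p on 𝕋² such that ∑_{j=1}^{2} l_j^⊥ (l_j·∇)(R_j^o Q) = ∇Q + ∇^⊥ p, where ∇^⊥ = (−∂₂, ∂₁). -/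

import Mathlib

open MeasureTheory Complex Filter

noncomputable section

abbrev Z2 := ℤ × ℤ

/-- dot product of an integer frequency with a point of `ℝ²` -/
def dotZ (k : Z2) (x : ℝ × ℝ) : ℝ := (k.1 : ℝ) * x.1 + (k.2 : ℝ) * x.2

/-- Euclidean norm of an integer frequency -/
def knorm (k : Z2) : ℝ := Real.sqrt ((k.1 : ℝ) ^ 2 + (k.2 : ℝ) ^ 2)

/-- Euclidean norm on `ℝ²` (realized as `ℝ × ℝ`) -/
def e2 (x : ℝ × ℝ) : ℝ := Real.sqrt (x.1 ^ 2 + x.2 ^ 2)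

/-- the fundamental domain `[-π, π]²` of the torus -/
def Q2 : Set (ℝ × ℝ) := Set.Icc (-Real.pi, -Real.pi) (Real.pi, Real.pi)

/-- `2π`-periodicity in both variables -/
def Periodic2 (f : ℝ × ℝ → ℂ) : Prop :=
  ∀ x : ℝ × ℝ, f (x.1 + 2 * Real.pi, x.2) = f x ∧ f (x.1, x.2 + 2 * Real.pi) = f x

def RealValued (f : ℝ × ℝ → ℂ) : Prop := ∀ x, (f x).im = 0

/-- Fourier coefficient `f̂(k) = (2π)⁻² ∫_{𝕋²} f(x) e^{-ik⋅x} dx` -/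
def fCoeff (f : ℝ × ℝ → ℂ) (k : Z2) : ℂ :=
  (1 / (2 * Real.pi) ^ 2 : ℂ) * ∫ x in Q2, f x * Complex.exp (-Complex.I * (dotZ k x : ℝ))

/-- Fourier multiplier operator with symbol `m` -/
def Tmult (m : Z2 → ℂ) (f : ℝ × ℝ → ℂ) : ℝ × ℝ → ℂ :=
  fun x => ∑' k : Z2, m k * fCoeff f k * Complex.exp (Complex.I * (dotZ k x : ℝ))

/-- `Λ^s = (-Δ)^{s/2}`, the multiplier with symbol `|k|^s` (killing `k = 0` for `s ≤ 0`) -/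
def Lam (s : ℝ) : (ℝ × ℝ → ℂ) → (ℝ × ℝ → ℂ) :=
  Tmult fun k => if k = 0 then 0 else ((knorm k ^ s : ℝ) : ℂ)

/-- symbol of the Riesz transform `R_j`, `i k_j / |k|` -/
def rieszSym (j : Fin 2) (k : Z2) : ℂ :=
  if k = 0 then 0
  else Complex.I * ((if j = 0 then (k.1 : ℝ) else (k.2 : ℝ)) : ℂ) / ((knorm k : ℝ) : ℂ)

/-- the Riesz transform `R_j` -/
def Riesz (j : Fin 2) : (ℝ × ℝ → ℂ) → (ℝ × ℝ → ℂ) := Tmult (rieszSym j)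

/-- symbol of the modified Riesz-type transforms `R_j^o` of Lemma 2.2 -/
def RoSym (j : Fin 2) (k : Z2) : ℝ :=
  if k = 0 then 0
  else if j = 0 then 25 * ((k.2 : ℝ) ^ 2 - (k.1 : ℝ) ^ 2) / (12 * ((k.1 : ℝ) ^ 2 + (k.2 : ℝ) ^ 2))
  else 7 * ((k.2 : ℝ) ^ 2 - (k.1 : ℝ) ^ 2) / (12 * ((k.1 : ℝ) ^ 2 + (k.2 : ℝ) ^ 2))
      + 4 * (k.1 : ℝ) * (k.2 : ℝ) / ((k.1 : ℝ) ^ 2 + (k.2 : ℝ) ^ 2)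

/-- the Riesz-type transforms `R_j^o` -/
def Ro (j : Fin 2) : (ℝ × ℝ → ℂ) → (ℝ × ℝ → ℂ) := Tmult fun k => ((RoSym j k : ℝ) : ℂ)

/-- symbol of `Δ⁻¹` (mean annihilated) -/
def deltaInvSym (k : Z2) : ℂ := if k = 0 then 0 else -1 / ((knorm k ^ 2 : ℝ) : ℂ)

/-- directional derivative `(v ⋅ ∇) f` -/
def dirD (v : ℝ × ℝ) (f : ℝ × ℝ → ℂ) : ℝ × ℝ → ℂ := fun x => fderiv ℝ f x v

/-- partial derivative `∂_j f` -/
def pd (j : Fin 2) (f : ℝ × ℝ → ℂ) : ℝ × ℝ → ℂ :=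
  dirD (if j = 0 then ((1 : ℝ), (0 : ℝ)) else ((0 : ℝ), (1 : ℝ))) f

/-- sup norm on the torus -/
def supNorm (f : ℝ × ℝ → ℂ) : ℝ := ⨆ x : ℝ × ℝ, ‖f x‖

/-- the `X`-norm `‖q‖_X = ‖q‖_∞ + ‖R₁^o q‖_∞ + ‖R₂^o q‖_∞` -/
def Xnorm (q : ℝ × ℝ → ℂ) : ℝ := supNorm q + supNorm (Ro 0 q) + supNorm (Ro 1 q)

/-- the vectors `l₁ = (3/5, 4/5)` and `l₂ = (1,0)` -/
def l1 : ℝ × ℝ := (3 / 5, 4 / 5)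
def l2 : ℝ × ℝ := (1, 0)

/-- the rotation `l ↦ l^⊥` -/
def perp (l : ℝ × ℝ) : ℝ × ℝ := (-l.2, l.1)

/-- symbol view of frequencies as real vectors -/
def toR (k : Z2) : ℝ × ℝ := ((k.1 : ℝ), (k.2 : ℝ))

/-- the operator `T^{(1)}_{λl}` (where `κ = λl ∈ ℤ²`) -/
def T1op (κ : Z2) (lam : ℝ) : (ℝ × ℝ → ℂ) → (ℝ × ℝ → ℂ) :=
  Tmult fun k => (((knorm (κ + k) + knorm (κ - k)) / 2 - lam : ℝ) : ℂ)

/-- the operator `T^{(2)}_{λl}` (where `κ = λl ∈ ℤ²`) -/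
def T2op (κ : Z2) (l : ℝ × ℝ) : (ℝ × ℝ → ℂ) → (ℝ × ℝ → ℂ) :=
  Tmult fun k =>
    Complex.I * (((knorm (κ + k) - knorm (κ - k)) / 2 - (l.1 * (k.1 : ℝ) + l.2 * (k.2 : ℝ)) : ℝ) : ℂ)

/-- the functions `a_j = 2 √(r/den) √(C₀ + R_j^o q / r)` -/
def aPerf (q : ℝ × ℝ → ℂ) (r den C₀ : ℝ) (j : Fin 2) : ℝ × ℝ → ℂ :=
  fun x => ((2 * Real.sqrt (r / den) * Real.sqrt (C₀ + (Ro j q x).re / r) : ℝ) : ℂ)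

/-- `λ_n = ⌈λ₀^{bⁿ}⌉` -/
def lamSeq (lam0 : ℕ) (b : ℝ) (n : ℕ) : ℕ := ⌈((lam0 : ℝ)) ^ (b ^ n)⌉₊

/-- `r_n = λ_n^{-β}` -/
def rSeq (lam0 : ℕ) (b β : ℝ) (n : ℕ) : ℝ := ((lamSeq lam0 b n : ℝ)) ^ (-β)

/-- `μ_{n+1} = (λ_n λ_{n+1})^{1/2}` -/
def muSeq (lam0 : ℕ) (b : ℝ) (n : ℕ) : ℝ :=
  Real.sqrt ((lamSeq lam0 b n : ℝ) * (lamSeq lam0 b (n + 1) : ℝ))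

/-- smooth Fourier cutoff `P_{≤μ}` associated to a bump `ψ` -/
def Pcut (ψ : ℝ × ℝ → ℝ) (μ : ℝ) : (ℝ × ℝ → ℂ) → (ℝ × ℝ → ℂ) :=
  Tmult fun k => ((ψ ((k.1 : ℝ) / μ, (k.2 : ℝ) / μ) : ℝ) : ℂ)

/-- bilinear multiplier with symbol the Fourier transform of a kernel `K ∈ L¹(ℝ²×ℝ²)` -/
def mOf (K : (ℝ × ℝ) × (ℝ × ℝ) → ℂ) (ξ η : ℝ × ℝ) : ℂ :=
  ∫ z : (ℝ × ℝ) × (ℝ × ℝ),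
    K z * Complex.exp (-Complex.I * ((ξ.1 * z.1.1 + ξ.2 * z.1.2 + η.1 * z.2.1 + η.2 * z.2.2 : ℝ) : ℂ))

/-- the bilinear multiplier operator associated to a kernel `K ∈ L¹(ℝ²×ℝ²)` -/
def Tbil (K : (ℝ × ℝ) × (ℝ × ℝ) → ℂ) (f g : ℝ × ℝ → ℂ) : ℝ × ℝ → ℂ :=
  fun x => ∑' k : Z2,
    (∑' k' : Z2, mOf K (toR k') (toR (k - k')) * fCoeff f k' * fCoeff g (k - k'))
      * Complex.exp (Complex.I * (dotZ k x : ℝ))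

/-- Fourier coefficients of the commutator `[R_j, φ]θ`, computed from those of `φ` and `θ` -/
def commCoeff (j : Fin 2) (φh c : Z2 → ℂ) (k : Z2) : ℂ :=
  ∑' k' : Z2, (rieszSym j k - rieszSym j k') * φh (k - k') * c k'


/-- trigonometric series with coefficients `c` -/
def trigS (c : Z2 → ℂ) : ℝ × ℝ → ℂ :=
  fun x => ∑' k : Z2, c k * Complex.exp (Complex.I * (dotZ k x : ℝ))

/-- weight -/
def wt (k : Z2) : ℝ := 1 + |(k.1 : ℝ)| + |(k.2 : ℝ)|

lemma wt_pos (k : Z2) : 0 < wt k := by unfold wt; positivity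
lemma one_le_wt (k : Z2) : 1 ≤ wt k := by
  unfold wt; have := abs_nonneg (k.1 : ℝ); have := abs_nonneg (k.2 : ℝ); linarith

/-- rapidly decaying coefficients -/
def Rapid (c : Z2 → ℂ) : Prop := ∀ N : ℕ, Summable fun k => wt k ^ N * ‖c k‖

lemma Rapid.mul {c : Z2 → ℂ} (hc : Rapid c) (m : Z2 → ℂ) (C : ℝ) (M : ℕ)
    (hm : ∀ k, ‖m k‖ ≤ C * wt k ^ M) : Rapid (fun k => m k * c k) := by
  intro N
  refine Summable.of_nonneg_of_le (fun k => ?_) (fun k => ?_) ((hc (N + M)).mul_left C)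
  · have := wt_pos k; positivity
  · rw [norm_mul]
    have h1 := hm k
    have := wt_pos k
    calc wt k ^ N * (‖m k‖ * ‖c k‖) ≤ wt k ^ N * ((C * wt k ^ M) * ‖c k‖) := by gcongr
      _ = _ := by ring

lemma Rapid.summable {c : Z2 → ℂ} (hc : Rapid c) : Summable fun k => ‖c k‖ := by
  simpa using hc 0

lemma norm_expI (r : ℝ) : ‖Complex.exp (Complex.I * (r : ℂ))‖ = 1 := by
  rw [mul_comm]; exact Complex.norm_exp_ofReal_mul_I r

lemma Rapid.summable_exp {c : Z2 → ℂ} (hc : Rapid c) (x : ℝ × ℝ) :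
    Summable fun k => c k * Complex.exp (Complex.I * (dotZ k x : ℝ)) := by
  refine Summable.of_norm ?_
  simpa [norm_expI] using hc.summable

/-- `dotZ k` as a continuous linear map -/
def dotL (k : Z2) : ℝ × ℝ →L[ℝ] ℝ :=
  (k.1 : ℝ) • ContinuousLinearMap.fst ℝ ℝ ℝ + (k.2 : ℝ) • ContinuousLinearMap.snd ℝ ℝ ℝ

lemma dotL_apply (k : Z2) (x : ℝ × ℝ) : dotL k x = dotZ k x := by
  simp [dotL, dotZ]

lemma abs_dotZ_le (k : Z2) (v : ℝ × ℝ) : |dotZ k v| ≤ wt k * ‖v‖ := by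
  unfold dotZ wt
  have h1 : |v.1| ≤ ‖v‖ := norm_fst_le v
  have h2 : |v.2| ≤ ‖v‖ := norm_snd_le v
  calc _ ≤ |(k.1 : ℝ) * v.1| + |(k.2 : ℝ) * v.2| := abs_add_le _ _
    _ = |(k.1 : ℝ)| * |v.1| + |(k.2 : ℝ)| * |v.2| := by rw [abs_mul, abs_mul]
    _ ≤ |(k.1 : ℝ)| * ‖v‖ + |(k.2 : ℝ)| * ‖v‖ := by gcongr
    _ ≤ _ := by nlinarith [norm_nonneg v]

lemma norm_dotL_le (k : Z2) : ‖dotL k‖ ≤ wt k := by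
  refine ContinuousLinearMap.opNorm_le_bound _ (wt_pos k).le (fun v => ?_)
  rw [dotL_apply]; exact abs_dotZ_le k v

/-- derivative of a single mode -/
def modeD (c : Z2 → ℂ) (k : Z2) (x : ℝ × ℝ) : ℝ × ℝ →L[ℝ] ℂ :=
  (dotL k).smulRight (Complex.I * (c k * Complex.exp (Complex.I * (dotZ k x : ℝ))))

lemma hasFDerivAt_mode (k : Z2) (x : ℝ × ℝ) :
    HasFDerivAt (fun x => Complex.exp (Complex.I * (dotZ k x : ℝ)))
      ((dotL k).smulRight (Complex.I * Complex.exp (Complex.I * (dotZ k x : ℝ)))) x := by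
  have h1 : HasFDerivAt (fun x => dotZ k x) (dotL k) x := by
    have := (dotL k).hasFDerivAt (x := x)
    simpa only [dotL_apply] using! this
  have h2 : HasDerivAt (fun r : ℝ => Complex.exp (Complex.I * (r : ℂ)))
      (Complex.I * Complex.exp (Complex.I * (dotZ k x : ℝ))) (dotZ k x) := by
    have h3 : HasDerivAt (fun r : ℝ => Complex.I * (r : ℂ)) Complex.I (dotZ k x) := by
      simpa using (Complex.ofRealCLM.hasDerivAt (x := dotZ k x)).const_mul Complex.I
    have := h3.cexp
    rwa [mul_comm] at this
  have := h2.hasFDerivAt.comp x h1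
  refine this.congr_fderiv ?_
  ext <;> simp

lemma norm_modeD_le (c : Z2 → ℂ) (k : Z2) (x : ℝ × ℝ) : ‖modeD c k x‖ ≤ wt k ^ 1 * ‖c k‖ := by
  unfold modeD
  rw [ContinuousLinearMap.norm_smulRight_apply, norm_mul, norm_mul, norm_expI, Complex.norm_I]
  have := norm_dotL_le k
  simp only [one_mul, mul_one, pow_one]
  gcongr

lemma Rapid.hasFDerivAt {c : Z2 → ℂ} (hc : Rapid c) (x : ℝ × ℝ) :
    HasFDerivAt (trigS c) (∑' k, modeD c k x) x := by
  refine hasFDerivAt_tsum (hc 1) (fun k x => ?_) (fun k x => norm_modeD_le c k x)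
    (hc.summable_exp 0) x
  refine ((hasFDerivAt_mode k x).const_mul (c k)).congr_fderiv ?_
  ext <;> simp [modeD] <;> ring

lemma Rapid.dirD {c : Z2 → ℂ} (hc : Rapid c) (v : ℝ × ℝ) :
    dirD v (trigS c) = trigS (fun k => (Complex.I * (dotZ k v : ℝ)) * c k) := by
  funext x
  have hs : Summable (fun k => modeD c k x) :=
    Summable.of_norm_bounded (hc 1) (fun k => norm_modeD_le c k x)
  unfold _root_.dirD
  rw [(hc.hasFDerivAt x).fderiv]
  have := (ContinuousLinearMap.apply ℝ ℂ v).map_tsum hs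
  simp only [ContinuousLinearMap.apply_apply] at this
  rw [this]
  unfold trigS
  congr 1; funext k
  simp [modeD, dotL_apply]; ring

lemma Rapid.rapid_dirD {c : Z2 → ℂ} (hc : Rapid c) (v : ℝ × ℝ) :
    Rapid (fun k => (Complex.I * (dotZ k v : ℝ)) * c k) := by
  refine hc.mul _ ‖v‖ 1 (fun k => ?_)
  have := abs_dotZ_le k v
  simp only [norm_mul, Complex.norm_I, one_mul, pow_one, Complex.norm_real, Real.norm_eq_abs]
  linarith

lemma Rapid.contDiff {c : Z2 → ℂ} (hc : Rapid c) : ContDiff ℝ (⊤ : ℕ∞) (trigS c) := by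
  rw [contDiff_infty]
  intro n
  induction n generalizing c with
  | zero =>
    refine contDiff_zero.2 ?_
    exact continuous_iff_continuousAt.2 fun x => (hc.hasFDerivAt x).continuousAt
  | succ n ih =>
    push_cast
    refine contDiff_succ_iff_fderiv_apply.2 ⟨fun x => (hc.hasFDerivAt x).differentiableAt, ?_, ?_⟩
    · simp
    · intro v
      have := ih (hc.rapid_dirD v)
      rwa [← hc.dirD v] at this

lemma trigS_periodic (c : Z2 → ℂ) : Periodic2 (trigS c) := by
  intro x
  unfold trigS
  constructor
  · congr 1; funext k
    have : Complex.I * ((dotZ k (x.1 + 2 * Real.pi, x.2) : ℝ) : ℂ)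
      = Complex.I * ((dotZ k x : ℝ) : ℂ) + k.1 * (2 * Real.pi * Complex.I) := by
      simp [dotZ]; ring
    rw [this, Complex.exp_add, Complex.exp_int_mul_two_pi_mul_I, mul_one]
  · congr 1; funext k
    have : Complex.I * ((dotZ k (x.1, x.2 + 2 * Real.pi) : ℝ) : ℂ)
      = Complex.I * ((dotZ k x : ℝ) : ℂ) + k.2 * (2 * Real.pi * Complex.I) := by
      simp [dotZ]; ring
    rw [this, Complex.exp_add, Complex.exp_int_mul_two_pi_mul_I, mul_one]

/-! decay of Fourier coefficients -/

lemma pd_periodic {f : ℝ × ℝ → ℂ} (hp : Periodic2 f) (j : Fin 2) : Periodic2 (pd j f) := by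
  intro x
  unfold pd dirD
  constructor
  · congr 1
    have h : (fun y : ℝ × ℝ => f (y + (2 * Real.pi, 0))) = f := by
      funext y; rw [← (hp y).1]; congr 1; ext <;> simp
    have h2 := fderiv_comp_add_right (𝕜 := ℝ) (f := f) (x := x) ((2 * Real.pi, 0) : ℝ × ℝ)
    rw [h] at h2
    rw [h2]; congr 1; ext <;> simp
  · congr 1
    have h : (fun y : ℝ × ℝ => f (y + (0, 2 * Real.pi))) = f := by
      funext y; rw [← (hp y).2]; congr 1; ext <;> simp
    have h2 := fderiv_comp_add_right (𝕜 := ℝ) (f := f) (x := x) ((0, 2 * Real.pi) : ℝ × ℝ)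
    rw [h] at h2
    rw [h2]; congr 1; ext <;> simp

lemma pd_contDiff {f : ℝ × ℝ → ℂ} (hf : ContDiff ℝ (⊤ : ℕ∞) f) (j : Fin 2) :
    ContDiff ℝ (⊤ : ℕ∞) (pd j f) := by
  unfold pd dirD
  exact (hf.fderiv_right (m := (⊤ : ℕ∞)) (by simp)).clm_apply contDiff_const

lemma isCompact_Q2 : IsCompact Q2 := by
  unfold Q2; exact isCompact_Icc

lemma neg_pi_le : ((-Real.pi, -Real.pi) : ℝ × ℝ) ≤ (Real.pi, Real.pi) := by
  have := Real.pi_pos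
  constructor <;> simp <;> linarith

lemma integral_pd_eq_zero {G : ℝ × ℝ → ℂ} (hG : ContDiff ℝ (⊤ : ℕ∞) G) (hp : Periodic2 G)
    (j : Fin 2) : ∫ x in Q2, pd j G x = 0 := by
  have hd : ∀ x, HasFDerivAt G (fderiv ℝ G x) x := fun x =>
    (hG.differentiable (by simp) x).hasFDerivAt
  have hi : IntegrableOn (pd j G) Q2 :=
    (pd_contDiff hG j).continuous.continuousOn.integrableOn_compact isCompact_Q2
  have e : -Real.pi + 2 * Real.pi = Real.pi := by ring
  fin_cases j
  · have := integral_divergence_prod_Icc_of_hasFDerivAt_of_le G 0 (fderiv ℝ G) 0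
      (-Real.pi, -Real.pi) (Real.pi, Real.pi) neg_pi_le hG.continuous.continuousOn
      continuousOn_const (fun x _ => hd x) (fun x _ => hasFDerivAt_const 0 x)
      (by simpa [pd, dirD, Q2] using! hi)
    have h2 : ∀ y, G (Real.pi, y) = G (-Real.pi, y) := fun y => by
      have := (hp (-Real.pi, y)).1
      simpa [e] using this
    simpa [pd, dirD, Q2, h2] using! this
  · have := integral_divergence_prod_Icc_of_hasFDerivAt_of_le 0 G 0 (fderiv ℝ G)
      (-Real.pi, -Real.pi) (Real.pi, Real.pi) neg_pi_le 
      continuousOn_const hG.continuous.continuousOn (fun x _ => hasFDerivAt_const 0 x)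
      (fun x _ => hd x)
      (by simpa [pd, dirD, Q2] using! hi)
    have h2 : ∀ y, G (y, Real.pi) = G (y, -Real.pi) := fun y => by
      have := (hp (y, -Real.pi)).2
      simpa [e] using this
    simpa [pd, dirD, Q2, h2] using! this

/-- `j`-th component -/
def comp (j : Fin 2) (k : Z2) : ℝ := if j = 0 then (k.1 : ℝ) else (k.2 : ℝ)

lemma neg_exp (k : Z2) (x : ℝ × ℝ) : Complex.exp (-Complex.I * (dotZ k x : ℝ))
    = Complex.exp (Complex.I * (dotZ (-k) x : ℝ)) := by
  congr 1; simp [dotZ]; ring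

lemma contDiff_mode (k : Z2) :
    ContDiff ℝ (⊤ : ℕ∞) (fun x => Complex.exp (Complex.I * (dotZ k x : ℝ))) := by
  have h : ContDiff ℝ (⊤ : ℕ∞) (fun x => dotZ k x) := by
    unfold dotZ; fun_prop
  exact ContDiff.cexp (contDiff_const.mul (Complex.ofRealCLM.contDiff.comp h))

lemma mode_periodic (k : Z2) :
    Periodic2 (fun x => Complex.exp (Complex.I * (dotZ k x : ℝ))) := by
  have := trigS_periodic (fun m => if m = k then 1 else 0)
  have h : trigS (fun m => if m = k then 1 else 0)
      = (fun x => Complex.exp (Complex.I * (dotZ k x : ℝ))) := by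
    funext x
    unfold trigS
    rw [tsum_eq_single k (by intro b hb; simp [hb])]; simp
  rwa [h] at this

lemma fCoeff_pd {f : ℝ × ℝ → ℂ} (hf : ContDiff ℝ (⊤ : ℕ∞) f) (hp : Periodic2 f) (j : Fin 2)
    (k : Z2) : fCoeff (pd j f) k = Complex.I * (comp j k : ℝ) * fCoeff f k := by
  let E : ℝ × ℝ → ℂ := fun x => Complex.exp (Complex.I * (dotZ (-k) x : ℝ))
  have hE : ContDiff ℝ (⊤ : ℕ∞) E := contDiff_mode (-k)
  have hG : ContDiff ℝ (⊤ : ℕ∞) (fun x => f x * E x) := hf.mul hE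
  have hGp : Periodic2 (fun x => f x * E x) := by
    intro x
    have h1 := hp x
    have h2 : E (x.1 + 2 * Real.pi, x.2) = E x ∧ E (x.1, x.2 + 2 * Real.pi) = E x :=
      mode_periodic (-k) x
    exact ⟨by dsimp only; rw [h1.1, h2.1], by dsimp only; rw [h1.2, h2.2]⟩
  have h0 := integral_pd_eq_zero hG hGp j
  have hpd : ∀ x, pd j (fun x => f x * E x) x
      = pd j f x * E x - (Complex.I * (comp j k : ℝ)) * (f x * E x) := by
    intro x
    have hd : HasFDerivAt (fun x => f x * E x) _ x := ((hf.differentiable (by simp) x).hasFDerivAt).mul (hasFDerivAt_mode (-k) x)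
    unfold pd dirD
    rw [hd.fderiv]
    fin_cases j <;> simp [E, dotL_apply, dotZ, comp] <;> ring
  have i1 : IntegrableOn (fun x => pd j f x * E x) Q2 :=
    ((pd_contDiff hf j).mul hE).continuous.continuousOn.integrableOn_compact isCompact_Q2
  have i2 : IntegrableOn (fun x => (Complex.I * (comp j k : ℝ)) * (f x * E x)) Q2 :=
    ((contDiff_const.mul hG).continuous).continuousOn.integrableOn_compact isCompact_Q2
  simp_rw [hpd] at h0
  rw [integral_sub i1 i2, integral_const_mul, sub_eq_zero] at h0
  unfold fCoeff
  simp_rw [neg_exp]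
  simp only [E] at h0
  rw [h0]; ring

lemma fCoeff_bdd (f : ℝ × ℝ → ℂ) : ∃ C : ℝ, ∀ k, ‖fCoeff f k‖ ≤ C := by
  refine ⟨‖(1 / (2 * Real.pi) ^ 2 : ℂ)‖ * ∫ x in Q2, ‖f x‖, fun k => ?_⟩
  unfold fCoeff
  rw [norm_mul]
  gcongr
  refine (norm_integral_le_integral_norm _).trans (le_of_eq ?_)
  simp_rw [neg_exp, norm_mul, norm_expI, mul_one]

lemma fCoeff_decay (N : ℕ) : ∀ {f : ℝ × ℝ → ℂ}, ContDiff ℝ (⊤ : ℕ∞) f → Periodic2 f →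
    ∃ C : ℝ, ∀ k, wt k ^ N * ‖fCoeff f k‖ ≤ C := by
  induction N with
  | zero => intro f _ _; simpa using fCoeff_bdd f
  | succ N ih =>
    intro f hf hp
    obtain ⟨C0, h0⟩ := ih hf hp
    obtain ⟨C1, h1⟩ := ih (pd_contDiff hf 0) (pd_periodic hp 0)
    obtain ⟨C2, h2⟩ := ih (pd_contDiff hf 1) (pd_periodic hp 1)
    refine ⟨C0 + C1 + C2, fun k => ?_⟩
    have e0 := h0 k
    have e1 := h1 k
    have e2 := h2 k
    rw [fCoeff_pd hf hp] at e1 e2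
    simp only [norm_mul, Complex.norm_I, one_mul, Complex.norm_real, Real.norm_eq_abs, comp,
      if_true] at e1 e2
    simp only [one_ne_zero, if_false] at e2
    calc wt k ^ (N + 1) * ‖fCoeff f k‖ = wt k ^ N * ‖fCoeff f k‖
          + wt k ^ N * (|(k.1 : ℝ)| * ‖fCoeff f k‖) + wt k ^ N * (|(k.2 : ℝ)| * ‖fCoeff f k‖) := by
          rw [pow_succ]; nth_rewrite 2 [wt]; ring
      _ ≤ _ := by linarith

lemma summable_int_sq : Summable (fun n : ℤ => 1 / (1 + |(n : ℝ)|) ^ 2) := by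
  have h1 : Summable (fun n : ℤ => 1 / (n : ℝ) ^ 2) :=
    Real.summable_one_div_int_pow.2 (by norm_num)
  have h2 : Summable (fun n : ℤ => if n = 0 then (1 : ℝ) else 0) :=
    (hasSum_ite_eq (0 : ℤ) (1 : ℝ)).summable
  refine Summable.of_nonneg_of_le (fun n => by positivity) (fun n => ?_) (h1.add h2)
  by_cases hn : n = 0
  · simp [hn]
  · simp only [hn, if_false, add_zero]
    have hn' : 0 < |(n : ℝ)| := abs_pos.2 (by exact_mod_cast hn)
    rw [← sq_abs (n : ℝ)]
    gcongr
    linarith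

lemma summable_wt : Summable (fun k : Z2 => 1 / wt k ^ 4) := by
  have h := summable_int_sq.mul_of_nonneg summable_int_sq
    (fun n => by positivity) (fun n => by positivity)
  refine Summable.of_nonneg_of_le (fun k => by have := wt_pos k; positivity) (fun k => ?_) h
  have a1 := abs_nonneg (k.1 : ℝ)
  have a2 := abs_nonneg (k.2 : ℝ)
  have e : wt k ^ 4 = wt k ^ 2 * wt k ^ 2 := by ring
  rw [e]
  rw [one_div_mul_one_div]
  have b1 : 1 + |(k.1 : ℝ)| ≤ wt k := by unfold wt; linarith
  have b2 : 1 + |(k.2 : ℝ)| ≤ wt k := by unfold wt; linarith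
  have := wt_pos k
  gcongr

lemma rapid_fCoeff {f : ℝ × ℝ → ℂ} (hf : ContDiff ℝ (⊤ : ℕ∞) f) (hp : Periodic2 f) :
    Rapid (fCoeff f) := by
  intro N
  obtain ⟨C, hC⟩ := fCoeff_decay (N + 4) hf hp
  refine Summable.of_nonneg_of_le (fun k => by have := wt_pos k; positivity) (fun k => ?_)
    (summable_wt.mul_left C)
  have := wt_pos k
  rw [mul_one_div, le_div_iff₀ (by positivity)]
  calc _ = wt k ^ (N + 4) * ‖fCoeff f k‖ := by ring
    _ ≤ _ := hC k

/-! Fourier inversion -/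

/-- the covering map of the torus -/
def covT : C(Fin 2 → ℝ, UnitAddTorus (Fin 2)) :=
  ⟨Pi.map (fun _ => ((↑) : ℝ → UnitAddCircle)), Continuous.piMap (fun _ => AddCircle.continuous_mk' 1)⟩

lemma covT_quot : Topology.IsQuotientMap covT :=
  (IsOpenQuotientMap.piMap (fun _ : Fin 2 => QuotientAddGroup.isOpenQuotientMap_mk)).isQuotientMap

lemma periodic_int {f : ℝ × ℝ → ℂ} (hp : Periodic2 f) (x : ℝ × ℝ) (m n : ℤ) :
    f (x.1 + m * (2 * Real.pi), x.2 + n * (2 * Real.pi)) = f x := by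
  have h1 : Function.Periodic (fun t => f (t, x.2 + n * (2 * Real.pi))) (2 * Real.pi) :=
    fun t => (hp (t, x.2 + n * (2 * Real.pi))).1
  have h2 : Function.Periodic (fun t => f (x.1, t)) (2 * Real.pi) :=
    fun t => (hp (x.1, t)).2
  have e1 := h1.int_mul m x.1
  have e2 := h2.int_mul n x.2
  exact e1.trans e2

lemma coe_eq_exists {a b : ℝ} (h : (a : UnitAddCircle) = b) : ∃ n : ℤ, a = b + n := by
  rw [← sub_eq_zero, ← AddCircle.coe_sub, AddCircle.coe_eq_zero_iff] at h
  obtain ⟨n, hn⟩ := h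
  refine ⟨n, ?_⟩
  simp at hn
  linarith

lemma exists_lift {f : ℝ × ℝ → ℂ} (hf : Continuous f) (hp : Periodic2 f) :
    ∃ F : C(UnitAddTorus (Fin 2), ℂ), ∀ y : Fin 2 → ℝ,
      F (fun i => (y i : UnitAddCircle)) = f (2 * Real.pi * y 0, 2 * Real.pi * y 1) := by
  let g : C(Fin 2 → ℝ, ℂ) := ⟨fun y => f (2 * Real.pi * y 0, 2 * Real.pi * y 1), by fun_prop⟩
  have hg : Function.FactorsThrough g covT := by
    intro a b hab
    obtain ⟨m, hm⟩ := coe_eq_exists (congrFun hab 0)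
    obtain ⟨n, hn⟩ := coe_eq_exists (congrFun hab 1)
    change f (2 * Real.pi * a 0, 2 * Real.pi * a 1) = f (2 * Real.pi * b 0, 2 * Real.pi * b 1)
    rw [← periodic_int hp (2 * Real.pi * b 0, 2 * Real.pi * b 1) m n, hm, hn]
    congr 1; ext <;> simp <;> ring
  refine ⟨covT_quot.lift g hg, fun y => ?_⟩
  have := covT_quot.lift_comp g hg
  exact DFunLike.congr_fun this y

lemma mFourier_coe (n : Fin 2 → ℤ) (y : Fin 2 → ℝ) :
    UnitAddTorus.mFourier n (fun i => (y i : UnitAddCircle))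
      = Complex.exp (Complex.I * (dotZ (n 0, n 1) (2 * Real.pi * y 0, 2 * Real.pi * y 1) : ℝ)) := by
  simp only [UnitAddTorus.mFourier, ContinuousMap.coe_mk, Fin.prod_univ_two, fourier_coe_apply]
  rw [← Complex.exp_add]
  congr 1
  simp [dotZ]; ring

open scoped Pointwise in
lemma smul_Ioc_sq : (2 * Real.pi) • (Set.Ioc (-(1/2) : ℝ) (-(1/2) + 1) ×ˢ Set.Ioc (-(1/2) : ℝ) (-(1/2) + 1))
    = Set.Ioc (-Real.pi) Real.pi ×ˢ Set.Ioc (-Real.pi) Real.pi := by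
  have hpi := Real.pi_pos
  have h0 : (2 * Real.pi) ≠ 0 := by positivity
  have key : ∀ t : ℝ, (-(1/2) < (2 * Real.pi)⁻¹ * t ↔ -Real.pi < t) ∧
      ((2 * Real.pi)⁻¹ * t ≤ -(1/2) + 1 ↔ t ≤ Real.pi) := by
    intro t
    constructor
    · rw [inv_mul_eq_div, lt_div_iff₀ (by positivity)]
      constructor <;> intro h <;> linarith
    · rw [inv_mul_eq_div, div_le_iff₀ (by positivity)]
      constructor <;> intro h <;> linarith
  ext x
  rw [Set.mem_smul_set_iff_inv_smul_mem₀ h0]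
  simp only [Set.mem_prod, Set.mem_Ioc, Prod.smul_fst, Prod.smul_snd, smul_eq_mul,
    (key _).1, (key _).2]

lemma Ioc_ae_Q2 : (Set.Ioc (-Real.pi) Real.pi ×ˢ Set.Ioc (-Real.pi) Real.pi : Set (ℝ × ℝ))
    =ᵐ[volume] Q2 := by
  unfold Q2
  rw [← Set.Icc_prod_Icc]
  exact Measure.set_prod_ae_eq Ioc_ae_eq_Icc Ioc_ae_eq_Icc

lemma mFourierCoeff_lift {f : ℝ × ℝ → ℂ} (F : C(UnitAddTorus (Fin 2), ℂ))
    (hF : ∀ y : Fin 2 → ℝ,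
      F (fun i => (y i : UnitAddCircle)) = f (2 * Real.pi * y 0, 2 * Real.pi * y 1))
    (n : Fin 2 → ℤ) : UnitAddTorus.mFourierCoeff F n = fCoeff f (n 0, n 1) := by
  rw [UnitAddTorus.mFourierCoeff_eq_integral F n (fun _ => -(1/2))]
  let h : ℝ × ℝ → ℂ := fun x => f x * Complex.exp (-Complex.I * (dotZ (n 0, n 1) x : ℝ))
  have e1 : ∀ y : Fin 2 → ℝ, UnitAddTorus.mFourier (-n) (fun i => (y i : UnitAddCircle))
      • F (fun i => (y i : UnitAddCircle)) = h ((2 * Real.pi) • (MeasurableEquiv.finTwoArrow y)) := by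
    intro y
    rw [hF, mFourier_coe, smul_eq_mul, mul_comm]
    simp only [h, neg_exp]
    rfl
  simp_rw [e1]
  have hs : {x : Fin 2 → ℝ | ∀ i, x i ∈ Set.Ioc (-(1/2) : ℝ) (-(1/2) + 1)}
      = MeasurableEquiv.finTwoArrow ⁻¹'
        (Set.Ioc (-(1/2) : ℝ) (-(1/2) + 1) ×ˢ Set.Ioc (-(1/2) : ℝ) (-(1/2) + 1)) := by
    ext x
    simp only [Set.mem_ofPred_eq, Fin.forall_fin_two, Set.mem_preimage, Set.mem_prod]
    rfl
  rw [hs, (volume_preserving_finTwoArrow ℝ).setIntegral_preimage_emb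
    (MeasurableEquiv.measurableEmbedding _) (fun z => h ((2 * Real.pi) • z)),
    Measure.setIntegral_comp_smul_of_pos _ _ _ (by positivity), smul_Ioc_sq,
    setIntegral_congr_set Ioc_ae_Q2]
  simp [fCoeff, h]

lemma inversion {f : ℝ × ℝ → ℂ} (hf : ContDiff ℝ (⊤ : ℕ∞) f) (hp : Periodic2 f) :
    trigS (fCoeff f) = f := by
  obtain ⟨F, hF⟩ := exists_lift hf.continuous hp
  have hc := mFourierCoeff_lift F hF
  have hsum : Summable (UnitAddTorus.mFourierCoeff F) := by
    have h1 : Summable (fCoeff f) := (rapid_fCoeff hf hp).summable.of_norm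
    have h2 := (finTwoArrowEquiv ℤ).summable_iff.2 h1
    refine h2.congr fun n => ?_
    rw [hc]; rfl
  funext x
  have hpi := Real.pi_pos
  have h := UnitAddTorus.hasSum_mFourier_series_apply_of_summable hsum
    (fun i => ((![x.1 / (2 * Real.pi), x.2 / (2 * Real.pi)] i : ℝ) : UnitAddCircle))
  have ex : ((2 * Real.pi * (x.1 / (2 * Real.pi)), 2 * Real.pi * (x.2 / (2 * Real.pi))) : ℝ × ℝ) = x := by
    ext <;> simp <;> field_simp
  rw [hF] at h
  simp_rw [mFourier_coe, hc] at h
  simp only [Matrix.cons_val_zero, Matrix.cons_val_one, ex] at h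
  unfold trigS
  rw [← (finTwoArrowEquiv ℤ).tsum_eq]
  exact h.tsum_eq

lemma trigS_add {a b : Z2 → ℂ} (ha : Rapid a) (hb : Rapid b) (x : ℝ × ℝ) :
    trigS a x + trigS b x = trigS (fun k => a k + b k) x := by
  unfold trigS
  rw [← (ha.summable_exp x).tsum_add (hb.summable_exp x)]
  congr 1; funext k; ring

lemma trigS_smul (r : ℂ) (a : Z2 → ℂ) (x : ℝ × ℝ) :
    r * trigS a x = trigS (fun k => r * a k) x := by
  unfold trigS
  rw [← tsum_mul_left]
  congr 1; funext k; ring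

lemma Rapid.const_mul {c : Z2 → ℂ} (hc : Rapid c) (r : ℂ) : Rapid (fun k => r * c k) :=
  hc.mul (fun _ => r) ‖r‖ 0 (fun k => by simp)

lemma sq_sum_pos {k : Z2} (hk : k ≠ 0) : 0 < (k.1 : ℝ) ^ 2 + (k.2 : ℝ) ^ 2 := by
  by_contra h
  apply hk
  have h1 : (k.1 : ℝ) = 0 := by nlinarith [sq_nonneg (k.1 : ℝ), sq_nonneg (k.2 : ℝ)]
  have h2 : (k.2 : ℝ) = 0 := by nlinarith [sq_nonneg (k.1 : ℝ), sq_nonneg (k.2 : ℝ)]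
  ext
  · exact_mod_cast h1
  · exact_mod_cast h2

lemma abs_RoSym_le (j : Fin 2) (k : Z2) : |RoSym j k| ≤ 5 := by
  unfold RoSym
  split_ifs with h1 h2
  · simp
  · have := sq_sum_pos h1
    rw [abs_le, le_div_iff₀ (by positivity), div_le_iff₀ (by positivity)]
    constructor <;> nlinarith [sq_nonneg (k.1 : ℝ), sq_nonneg (k.2 : ℝ)]
  · have := sq_sum_pos h1
    have e : 7 * ((k.2 : ℝ) ^ 2 - (k.1 : ℝ) ^ 2) / (12 * ((k.1 : ℝ) ^ 2 + (k.2 : ℝ) ^ 2))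
      + 4 * (k.1 : ℝ) * (k.2 : ℝ) / ((k.1 : ℝ) ^ 2 + (k.2 : ℝ) ^ 2)
      = (7 * ((k.2 : ℝ) ^ 2 - (k.1 : ℝ) ^ 2) + 48 * (k.1 : ℝ) * (k.2 : ℝ)) /
        (12 * ((k.1 : ℝ) ^ 2 + (k.2 : ℝ) ^ 2)) := by
      field_simp; ring
    rw [e, abs_le, le_div_iff₀ (by positivity), div_le_iff₀ (by positivity)]
    constructor <;> nlinarith [sq_nonneg ((k.1 : ℝ) + k.2), sq_nonneg ((k.1 : ℝ) - k.2)]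

/-- symbol of the stream function `p` -/
def pSym (k : Z2) : ℝ :=
  (dotZ k l1 ^ 2 * RoSym 0 k + (k.1 : ℝ) ^ 2 * RoSym 1 k) / ((k.1 : ℝ) ^ 2 + (k.2 : ℝ) ^ 2)

lemma abs_pSym_le (k : Z2) : |pSym k| ≤ 10 := by
  by_cases hk : k = 0
  · simp [pSym, hk]
  have := sq_sum_pos hk
  have h0 := abs_le.1 (abs_RoSym_le 0 k)
  have h1 := abs_le.1 (abs_RoSym_le 1 k)
  have hd : dotZ k l1 ^ 2 ≤ (k.1 : ℝ) ^ 2 + (k.2 : ℝ) ^ 2 := by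
    simp only [dotZ, l1]
    nlinarith [sq_nonneg ((k.1 : ℝ) * (4/5) - k.2 * (3/5))]
  have hd0 := sq_nonneg (dotZ k l1)
  have hk1 := sq_nonneg (k.1 : ℝ)
  have hk2 := sq_nonneg (k.2 : ℝ)
  unfold pSym
  rw [abs_le, le_div_iff₀ this, div_le_iff₀ this]
  constructor <;> nlinarith [mul_nonneg hd0 (sub_nonneg.2 h0.1), mul_nonneg hd0 (sub_nonneg.2 h0.2),
    mul_nonneg hk1 (sub_nonneg.2 h1.1), mul_nonneg hk1 (sub_nonneg.2 h1.2)]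

lemma sym_a (k : Z2) : dotZ k (perp l1) * dotZ k l1 * RoSym 0 k + dotZ k (perp l2) * dotZ k l2 * RoSym 1 k
    = (k.1 : ℝ) ^ 2 + (k.2 : ℝ) ^ 2 := by
  by_cases hk : k = 0
  · simp [hk, RoSym]
  have := sq_sum_pos hk
  simp only [RoSym, hk, if_false, if_true, one_ne_zero, dotZ, perp, l1, l2]
  field_simp
  ring

lemma sym_b1 (k : Z2) : (perp l1).1 * dotZ k l1 * RoSym 0 k + (perp l2).1 * dotZ k l2 * RoSym 1 k
    = (k.1 : ℝ) - (k.2 : ℝ) * pSym k := by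
  by_cases hk : k = 0
  · simp [hk, RoSym]
  have := sq_sum_pos hk
  simp only [pSym, RoSym, hk, if_false, if_true, one_ne_zero, dotZ, perp, l1, l2]
  field_simp
  ring

lemma sym_b2 (k : Z2) : (perp l1).2 * dotZ k l1 * RoSym 0 k + (perp l2).2 * dotZ k l2 * RoSym 1 k
    = (k.2 : ℝ) + (k.1 : ℝ) * pSym k := by
  by_cases hk : k = 0
  · simp [hk, RoSym]
  have := sq_sum_pos hk
  simp only [pSym, RoSym, hk, if_false, if_true, one_ne_zero, dotZ, perp, l1, l2]
  field_simp
  ring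

lemma dotZ_e1 (k : Z2) : dotZ k (1, 0) = k.1 := by simp [dotZ]
lemma dotZ_e2 (k : Z2) : dotZ k (0, 1) = k.2 := by simp [dotZ]

lemma pd0_eq (f : ℝ × ℝ → ℂ) : pd 0 f = dirD (1, 0) f := rfl
lemma pd1_eq (f : ℝ × ℝ → ℂ) : pd 1 f = dirD (0, 1) f := rfl

lemma main_aux (c : Z2 → ℂ) (hc : Rapid c) (A B q : ℝ × ℝ → ℂ)
    (hA : A = trigS (fun k => ((RoSym 0 k : ℝ) : ℂ) * c k))
    (hB : B = trigS (fun k => ((RoSym 1 k : ℝ) : ℂ) * c k)) (hq : q = trigS c) :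
    (∀ x, dirD (perp l1) (dirD l1 A) x + dirD (perp l2) (dirD l2 B) x
        = pd 0 (pd 0 q) x + pd 1 (pd 1 q) x) ∧
    ∃ p : ℝ × ℝ → ℂ, ContDiff ℝ (⊤ : ℕ∞) p ∧ Periodic2 p ∧
      ∀ x : ℝ × ℝ,
        ((perp l1).1 : ℂ) * dirD l1 A x + ((perp l2).1 : ℂ) * dirD l2 B x
          = pd 0 q x + -(pd 1 p x) ∧
        ((perp l1).2 : ℂ) * dirD l1 A x + ((perp l2).2 : ℂ) * dirD l2 B x
          = pd 1 q x + pd 0 p x := by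
  subst hA hB hq
  have h0 : Rapid (fun k => ((RoSym 0 k : ℝ) : ℂ) * c k) := hc.mul _ 5 0 (fun k => by
    simpa using abs_RoSym_le 0 k)
  have h1 : Rapid (fun k => ((RoSym 1 k : ℝ) : ℂ) * c k) := hc.mul _ 5 0 (fun k => by
    simpa using abs_RoSym_le 1 k)
  have hP : Rapid (fun k => ((pSym k : ℝ) : ℂ) * c k) := hc.mul _ 10 0 (fun k => by
    simpa using abs_pSym_le k)
  refine ⟨fun x => ?_, _, hP.contDiff, trigS_periodic _, fun x => ⟨?_, ?_⟩⟩
  · simp only [pd0_eq, pd1_eq]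
    rw [h0.dirD, (h0.rapid_dirD _).dirD, h1.dirD, (h1.rapid_dirD _).dirD, hc.dirD,
      (hc.rapid_dirD _).dirD, hc.dirD, (hc.rapid_dirD _).dirD,
      trigS_add ((h0.rapid_dirD _).rapid_dirD _) ((h1.rapid_dirD _).rapid_dirD _),
      trigS_add ((hc.rapid_dirD _).rapid_dirD _) ((hc.rapid_dirD _).rapid_dirD _)]
    congr 1; funext k
    have := congrArg (fun r : ℝ => (r : ℂ)) (sym_a k)
    simp only [dotZ_e1, dotZ_e2]
    push_cast at this ⊢
    linear_combination (Complex.I ^ 2 * c k) * this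
  · simp only [pd0_eq, pd1_eq]
    rw [h0.dirD, h1.dirD, hc.dirD, hP.dirD, trigS_smul, trigS_smul,
      ← neg_one_mul, trigS_smul,
      trigS_add ((h0.rapid_dirD _).const_mul _) ((h1.rapid_dirD _).const_mul _),
      trigS_add (hc.rapid_dirD _) ((hP.rapid_dirD _).const_mul _)]
    congr 1; funext k
    have := congrArg (fun r : ℝ => (r : ℂ)) (sym_b1 k)
    simp only [dotZ_e1, dotZ_e2]
    push_cast at this ⊢
    linear_combination (Complex.I * c k) * this
  · simp only [pd0_eq, pd1_eq]
    rw [h0.dirD, h1.dirD, hc.dirD, hP.dirD, trigS_smul, trigS_smul,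
      trigS_add ((h0.rapid_dirD _).const_mul _) ((h1.rapid_dirD _).const_mul _),
      trigS_add (hc.rapid_dirD _) (hP.rapid_dirD _)]
    congr 1; funext k
    have := congrArg (fun r : ℝ => (r : ℂ)) (sym_b2 k)
    simp only [dotZ_e1, dotZ_e2]
    push_cast at this ⊢
    linear_combination (Complex.I * c k) * this

/-- Algebraic Lemma 2.2: for smooth mean-zero `Q`,
(a) `∑_j (l_j^⊥·∇)(l_j·∇)(R_j^o Q) = ΔQ`, and consequently
(b) `∑_j l_j^⊥ (l_j·∇)(R_j^o Q) = ∇Q + ∇^⊥ p` for some smooth scalar `p`. -/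
theorem stmt6 (Q : ℝ × ℝ → ℂ) (hQ : ContDiff ℝ (⊤ : ℕ∞) Q) (hQp : Periodic2 Q)
    (hQr : RealValued Q) (hQ0 : fCoeff Q 0 = 0) :
    (∀ x, dirD (perp l1) (dirD l1 (Ro 0 Q)) x + dirD (perp l2) (dirD l2 (Ro 1 Q)) x
        = pd 0 (pd 0 Q) x + pd 1 (pd 1 Q) x) ∧
    ∃ p : ℝ × ℝ → ℂ, ContDiff ℝ (⊤ : ℕ∞) p ∧ Periodic2 p ∧
      ∀ x : ℝ × ℝ,
        ((perp l1).1 : ℂ) * dirD l1 (Ro 0 Q) x + ((perp l2).1 : ℂ) * dirD l2 (Ro 1 Q) x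
          = pd 0 Q x + -(pd 1 p x) ∧
        ((perp l1).2 : ℂ) * dirD l1 (Ro 0 Q) x + ((perp l2).2 : ℂ) * dirD l2 (Ro 1 Q) x
          = pd 1 Q x + pd 0 p x := by
  exact main_aux (fCoeff Q) (rapid_fCoeff hQ hQp) (Ro 0 Q) (Ro 1 Q) Q rfl rfl
    (inversion hQ hQp).symm

end
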